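/- The class of all finite path graphs is well-quasi-ordered by the induced subgraph relation, but it is not 2-well-quasi-ordered: there exists an infinite sequence of path graphs, each with a labelling of its vertices by a 2-element set, such that no earlier member admits a label-preserving induced-subgraph embedding into a later member. -/

import Mathlib

/-- A finite simple undirected graph, with vertex set `Fin n`. -/
structure FinGraph where
  n : ℕ
  adj : Fin n → Fin n → Prop
  symm : ∀ u v, adj u v → adj v u
  irrefl : ∀ u, ¬ adj u u

/-- The path graph `P_n` with vertices `1,…,n` and edges `{i, i+1}`. -/
def pathGraph (n : ℕ) : FinGraph where
  n := n
  adj := fun i j => i.val + 1 = j.val ∨ j.val + 1 = i.val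
  symm := fun u v h => h.symm
  irrefl := fun u h => by rcases h with h | h <;> omega

/-- A label-preserving induced-subgraph embedding between two `X`-labelled graphs. -/
def FinGraph.LEmb {X : Type} (G H : FinGraph)
    (lG : Fin G.n → X) (lH : Fin H.n → X) : Prop :=
  ∃ h : Fin G.n → Fin H.n, Function.Injective h ∧
    (∀ u v, H.adj (h u) (h v) ↔ G.adj u v) ∧ (∀ u, lH (h u) = lG u)

/-- An induced-subgraph embedding between two (unlabelled) graphs. -/
def FinGraph.Emb (G H : FinGraph) : Prop :=
  ∃ h : Fin G.n → Fin H.n, Function.Injective h ∧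
    (∀ u v, H.adj (h u) (h v) ↔ G.adj u v)

/-- The class of all finite path graphs is well-quasi-ordered by the induced subgraph
relation, but it is not `2`-well-quasi-ordered: there is an infinite sequence of path
graphs labelled by a set of at most two elements such that no earlier member admits a
label-preserving induced-subgraph embedding into a later member. -/
theorem stmt17 :
    (∀ G : ℕ → FinGraph, (∀ i, ∃ n, G i = pathGraph n) →
      ∃ i j, i < j ∧ FinGraph.Emb (G i) (G j)) ∧
    (∃ (X : Type) (_ : Fintype X), Fintype.card X ≤ 2 ∧
      ∃ (G : ℕ → FinGraph) (l : (i : ℕ) → Fin (G i).n → X),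
        (∀ i, ∃ n, G i = pathGraph n) ∧
        ∀ i j, i < j → ¬ FinGraph.LEmb (G i) (G j) (l i) (l j)) := by
  constructor
  · intro G hG
    choose n hn using hG
    obtain ⟨i, j, hij, hle⟩ := (wellQuasiOrdered_le (α := ℕ)) n
    refine ⟨i, j, hij, ?_⟩
    rw [hn i, hn j]
    exact ⟨Fin.castLE hle, Fin.castLE_injective hle, fun u v => Iff.rfl⟩
  · refine ⟨Bool, inferInstance, by simp, fun i => pathGraph (i + 2),
      fun i u => decide (u.val = 0 ∨ u.val = i + 1), fun i => ⟨_, rfl⟩, ?_⟩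
    rintro i j hij ⟨h, hinj, hadj, hlab⟩
    change Fin (i + 2) → Fin (j + 2) at h
    have key : ∀ k (hk : k < i + 2),
        (h ⟨k, hk⟩).val ≤ (h ⟨0, by omega⟩).val + k ∧
        (h ⟨0, by omega⟩).val ≤ (h ⟨k, hk⟩).val + k := by
      intro k
      induction k with
      | zero => intro hk; exact ⟨le_rfl, le_rfl⟩
      | succ k ih =>
        intro hk
        have h1 := ih (by omega)
        have h2 : (h ⟨k, by omega⟩).val + 1 = (h ⟨k + 1, hk⟩).val ∨
            (h ⟨k + 1, hk⟩).val + 1 = (h ⟨k, by omega⟩).val :=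
          (hadj ⟨k, Nat.lt_of_succ_lt hk⟩ ⟨k + 1, hk⟩).2 (Or.inl rfl)
        omega
    have hlast := key (i + 1) (by omega)
    have l0 : (h ⟨0, by omega⟩).val = 0 ∨ (h ⟨0, by omega⟩).val = j + 1 := by
      have := hlab ⟨0, Nat.succ_pos _⟩
      exact of_decide_eq_true (this.trans (decide_eq_true (Or.inl rfl)))
    have l1 : (h ⟨i + 1, by omega⟩).val = 0 ∨ (h ⟨i + 1, by omega⟩).val = j + 1 := by
      have := hlab ⟨i + 1, Nat.lt_succ_self _⟩
      exact of_decide_eq_true (this.trans (decide_eq_true (Or.inr rfl)))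
    have hne : (h ⟨0, by omega⟩).val ≠ (h ⟨i + 1, by omega⟩).val := by
      intro he
      have h3 := congrArg Fin.val (hinj (Fin.ext he))
      change 0 = i + 1 at h3
      omega
    omega
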